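/- There exists an absolute constant c > 0 such that the following holds for every k ≥ 2 and every n large enough. Let V be a finite vertex set with |V| = n. There exists a single k-distinguisher g over V such that for every ε > 0 and every (k−1)-distinguishing class G_{k−1} over V: if for all probability distributions p₁, p₂ on V one has IPM_{G_{k−1}}(p₁,p₂) ≥ ε·|L_{p₁}(g) − L_{p₂}(g)|, then gVC(G_{k−1}) ≥ c·(ε²/k²)·√(log₂ n). -/

import Mathlib

open scoped BigOperators

namespace GraphDisc

/-- A `k`-distinguisher is symmetric: invariant under all permutations of arguments. -/
def IsSymmetric {V : Type*} {k : ℕ} (g : (Fin k → V) → Bool) : Prop :=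
  ∀ (σ : Equiv.Perm (Fin k)) (w : Fin k → V), g (w ∘ σ) = g w

/-- A `k`-distinguishing class: a family of symmetric Boolean `k`-ary functions. -/
def IsDistinguishingClass {V : Type*} {k : ℕ} (G : Set ((Fin k → V) → Bool)) : Prop :=
  ∀ g ∈ G, IsSymmetric g

/-- `p` is a probability distribution on `V` (as a mass function). -/
def IsDist {V : Type*} (p : V → ℝ) : Prop := (∀ v, 0 ≤ p v) ∧ HasSum p 1

/-- `L_P(g)`: expected value of `g` on a `k`-tuple of i.i.d. samples from `p`. -/
noncomputable def LP {V : Type*} {k : ℕ} (p : V → ℝ) (g : (Fin k → V) → Bool) : ℝ :=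
  ∑' w : Fin k → V, (∏ i, p (w i)) * (if g w then 1 else 0)

/-- `L_S(g)`: empirical frequency of `g` on all `k`-tuples from the sample `S`. -/
noncomputable def LS {V : Type*} {k m : ℕ} (S : Fin m → V) (g : (Fin k → V) → Bool) : ℝ :=
  (∑ t : Fin k → Fin m, if g (S ∘ t) then (1 : ℝ) else 0) / (m : ℝ) ^ k

/-- Probability of an event `E` under an i.i.d. sample of size `m` from `p`. -/
noncomputable def Prob {V : Type*} (p : V → ℝ) {m : ℕ} (E : Set (Fin m → V)) : ℝ :=
  ∑' S : Fin m → V, E.indicator (fun S => ∏ i, p (S i)) S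

/-- Probability of an event `E` under two independent i.i.d. samples of size `m`. -/
noncomputable def Prob2 {V : Type*} (p₁ p₂ : V → ℝ) {m : ℕ}
    (E : Set ((Fin m → V) × (Fin m → V))) : ℝ :=
  ∑' S : (Fin m → V) × (Fin m → V),
    E.indicator (fun S => (∏ i, p₁ (S.1 i)) * ∏ i, p₂ (S.2 i)) S

/-- IPM distance induced by a class of `k`-ary distinguishers. -/
noncomputable def IPM {V : Type*} {k : ℕ} (G : Set ((Fin k → V) → Bool))
    (p₁ p₂ : V → ℝ) : ℝ :=
  ⨆ g ∈ G, |LP p₁ g - LP p₂ g|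

/-- `L_P(d)` for a unary Boolean function `d`. -/
noncomputable def LP1 {V : Type*} (p : V → ℝ) (d : V → Bool) : ℝ :=
  ∑' v : V, p v * (if d v then 1 else 0)

/-- IPM distance for a family of unary Boolean functions. -/
noncomputable def IPM1 {V : Type*} (D : Set (V → Bool)) (p₁ p₂ : V → ℝ) : ℝ :=
  ⨆ d ∈ D, |LP1 p₁ d - LP1 p₂ d|

/-- `L_P(g)` for a binary (curried) Boolean function `g`. -/
noncomputable def LP2 {V : Type*} (p : V → ℝ) (g : V → V → Bool) : ℝ :=
  ∑' w : V × V, (p w.1 * p w.2) * (if g w.1 w.2 then 1 else 0)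

/-- `D` shatters the finite set `T`: every Boolean pattern on `T` is realized in `D`. -/
def Shatters {X : Type*} (D : Set (X → Bool)) (T : Finset X) : Prop :=
  ∀ f : X → Bool, ∃ d ∈ D, ∀ x ∈ T, d x = f x

/-- The VC dimension of a family of Boolean functions. -/
noncomputable def vcDim {X : Type*} (D : Set (X → Bool)) : ℕ∞ :=
  ⨆ T ∈ {T : Finset X | Shatters D T}, (T.card : ℕ∞)

/-- Fixing the first argument of a `(k+1)`-ary function to `v`. -/
def proj {V : Type*} {k : ℕ} (v : V) (g : (Fin (k + 1) → V) → Bool) :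
    (Fin k → V) → Bool := fun u => g (Fin.cons v u)

/-- The graph VC dimension, defined inductively: for `k = 1` it is the usual VC
dimension; for `k > 1` it is the supremum over `v` of the graph VC dimension of the
projected class `G_v`. -/
noncomputable def gvcDim {V : Type*} : (k : ℕ) → Set ((Fin k → V) → Bool) → ℕ∞
  | 0, G => vcDim G
  | 1, G => vcDim G
  | (k + 2), G => ⨆ v : V, gvcDim (k + 1) (proj v '' G)

open Classical in
/-- Mixture `q·δ_v + (1−q)·p`. -/
noncomputable def mix {V : Type*} (q : ℝ) (v : V) (p : V → ℝ) : V → ℝ :=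
  fun u => q * (if u = v then 1 else 0) + (1 - q) * p u

/-- The class of majority-vote threshold functions over `m`-tuples from `D`. -/
noncomputable def thresholdClass {V : Type*} (D : Set (V → Bool)) (m : ℕ) :
    Set (V → Bool) :=
  {h | ∃ d : Fin m → (V → Bool), (∀ i, d i ∈ D) ∧
        h = fun v => decide ((0 : ℝ) ≤ ∑ i, (2 * (if d i v then (1 : ℝ) else 0) - 1))}

/- Take `g` to be the `(κ + 2)`-partite distinguisher of a random `F : X ^ (κ + 1) × Y → Bool`.
If `G` dominates `g`, compare two distributions on a transversal of the `X`-parts together with `Y`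
that differ only on `Y`, one avoiding `{F a = 1}` and the other avoiding `{F a = 0}`: they force
some `h ∈ G`, with all but one argument fixed, to be a weak learner for the row `F a`. Boosting
recovers `F a` from a majority vote of `m ≈ ε⁻² log |Y|` such slices. If `gvcDim G ≤ ρ` then, by
Sauer–Shelah, each slice is one of `(|Y| + 1) ^ ρ` patterns on `Y`, so `F` is determined by a
table of these patterns and by `m * O(ρ log |Y|)` bits per row. When `ρ` is below `C ε² √log n` this
is fewer than the `|Y|` bits that a random row carries. -/
section Boosting

/-- `(ξ₁, ξ₂)` is a pair of probability vectors on `Y` concentrated on the two sides of `f`: `ξ₁`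
on the points where `f` is true and `ξ₂` on those where it is false. These are the reweightings of
a two-class sample against which a weak learner for `f` has to succeed. -/
structure IsSplit {Y : Type*} [Fintype Y] (f : Y → Bool) (ξ₁ ξ₂ : Y → ℝ) : Prop where
  mem₁ : ξ₁ ∈ stdSimplex ℝ Y
  mem₂ : ξ₂ ∈ stdSimplex ℝ Y
  off₁ : ∀ y, f y = false → ξ₁ y = 0
  off₂ : ∀ y, f y = true → ξ₂ y = 0

/-- The real hypotheses `e i` learn `f` weakly with advantage `δ`: for every reweighting of the two
sides of `f`, some `e i` has means on the two sides that differ by at least `δ`. -/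
def IsWeaklyLearnable {Y ι : Type*} [Fintype Y] (f : Y → Bool) (e : ι → Y → ℝ) (δ : ℝ) : Prop :=
  ∀ ξ₁ ξ₂, IsSplit f ξ₁ ξ₂ → ∃ i, δ ≤ ∑ y, (ξ₁ y - ξ₂ y) * e i y

/-- The partition function of the score `S` on `P` at inverse temperature `z`. -/
noncomputable def partitionSum {Y : Type*} (P : Finset Y) (z : ℝ) (S : Y → ℝ) : ℝ :=
  ∑ y ∈ P, Real.exp (z * S y)

open Classical in
/-- The exponential-weights (Gibbs) distribution on `P` for the score `S` at inverse temperature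
`z`, extended by zero outside `P`. -/
noncomputable def gibbs {Y : Type*} (P : Finset Y) (z : ℝ) (S : Y → ℝ) (y : Y) : ℝ :=
  if y ∈ P then Real.exp (z * S y) / partitionSum P z S else 0

variable {Y ι : Type*} {P : Finset Y} {z : ℝ} {S d : Y → ℝ} {f : Y → Bool} {e : ι → Y → ℝ}
  {δ η : ℝ}

lemma partitionSum_nonneg : 0 ≤ partitionSum P z S :=
  Finset.sum_nonneg fun _ _ => (Real.exp_pos _).le

lemma partitionSum_pos (hP : P.Nonempty) : 0 < partitionSum P z S :=
  Finset.sum_pos (fun _ _ => Real.exp_pos _) hP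

lemma exp_le_partitionSum {y : Y} (hy : y ∈ P) : Real.exp (z * S y) ≤ partitionSum P z S :=
  Finset.single_le_sum (f := fun y => Real.exp (z * S y)) (fun _ _ => (Real.exp_pos _).le) hy

lemma gibbs_of_notMem {y : Y} (hy : y ∉ P) : gibbs P z S y = 0 :=
  if_neg hy

lemma sum_gibbs_mul [Fintype Y] (g : Y → ℝ) :
    ∑ y, gibbs P z S y * g y = (∑ y ∈ P, Real.exp (z * S y) * g y) / partitionSum P z S := by
  simp only [gibbs, ite_mul, zero_mul, Finset.sum_ite_mem, Finset.univ_inter, Finset.sum_div,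
    div_mul_eq_mul_div]

lemma gibbs_mem_stdSimplex [Fintype Y] (hP : P.Nonempty) : gibbs P z S ∈ stdSimplex ℝ Y := by
  refine ⟨fun y => ?_, ?_⟩
  · rw [gibbs]
    split_ifs
    exacts [div_nonneg (Real.exp_pos _).le partitionSum_nonneg, le_rfl]
  · have h := sum_gibbs_mul (P := P) (z := z) (S := S) fun _ => 1
    simp only [mul_one] at h
    exact h.trans (div_self (partitionSum_pos hP).ne')

lemma exp_mul_le_one_add (hz : |z| ≤ 1) {x : ℝ} (hx : |x| ≤ 1) :
    Real.exp (z * x) ≤ 1 + z * x + z ^ 2 := by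
  have hzx : |z * x| ≤ |z| := by
    rw [abs_mul]
    exact mul_le_of_le_one_right (abs_nonneg z) hx
  have hsq : (z * x) ^ 2 ≤ z ^ 2 := sq_le_sq.2 hzx
  linarith [le_of_abs_le (Real.abs_exp_sub_one_sub_id_le (hzx.trans hz))]

lemma partitionSum_add_le [Fintype Y] (hz : |z| ≤ 1) (hd : ∀ y, |d y| ≤ 1) :
    partitionSum P z (S + d) ≤
      partitionSum P z S * Real.exp (z * ∑ y, gibbs P z S y * d y + z ^ 2) := by
  rcases P.eq_empty_or_nonempty with rfl | hP
  · simp [partitionSum]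
  have hpos : 0 < partitionSum P z S := partitionSum_pos hP
  calc partitionSum P z (S + d)
      = ∑ y ∈ P, Real.exp (z * S y) * Real.exp (z * d y) := by
        simp only [partitionSum, Pi.add_apply, mul_add, Real.exp_add]
    _ ≤ ∑ y ∈ P, Real.exp (z * S y) * (1 + z * d y + z ^ 2) := by
        gcongr with y _
        exact exp_mul_le_one_add hz (hd y)
    _ = ∑ y ∈ P, ((1 + z ^ 2) * Real.exp (z * S y) + z * (Real.exp (z * S y) * d y)) :=
        Finset.sum_congr rfl fun y _ => by ring
    _ = partitionSum P z S * (z * ∑ y, gibbs P z S y * d y + z ^ 2 + 1) := by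
        rw [Finset.sum_add_distrib, ← Finset.mul_sum, ← Finset.mul_sum, sum_gibbs_mul,
          ← partitionSum]
        field_simp
        ring
    _ ≤ _ := by
        gcongr
        exact Real.add_one_le_exp _

variable [Fintype Y]

/-- The boosting potential of the score `S` for `f` at learning rate `η`. The summand at a pair
`(x, y)` with `f x` true and `f y` false is at least one as soon as `S` ranks `x` no higher than
`y`, so a potential below one means that `S` separates the two sides of `f`. -/
noncomputable def boostPotential (f : Y → Bool) (η : ℝ) (S : Y → ℝ) : ℝ :=
  partitionSum {y | f y = true} (-η) S * partitionSum {y | f y = false} η S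

lemma one_le_boostPotential (hη : 0 ≤ η) {x y : Y} (hx : f x = true) (hy : f y = false)
    (hxy : S x ≤ S y) : 1 ≤ boostPotential f η S := by
  calc 1 ≤ Real.exp (-η * S x) * Real.exp (η * S y) := by
        rw [← Real.exp_add, Real.one_le_exp_iff]
        linarith [mul_le_mul_of_nonneg_left hxy hη]
    _ ≤ _ := mul_le_mul (exp_le_partitionSum (by simpa)) (exp_le_partitionSum (by simpa))
        (Real.exp_pos _).le partitionSum_nonneg

lemma boostPotential_zero_le : boostPotential f η 0 ≤ (Fintype.card Y : ℝ) ^ 2 := by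
  simp only [boostPotential, partitionSum, Pi.zero_apply, mul_zero, Real.exp_zero,
    Finset.sum_const, nsmul_eq_mul, mul_one, sq]
  gcongr <;> exact Finset.card_le_univ _

lemma isSplit_gibbs {x y : Y} (hx : f x = true) (hy : f y = false) (z z' : ℝ) (S S' : Y → ℝ) :
    IsSplit f (gibbs {y | f y = true} z S) (gibbs {y | f y = false} z' S') where
  mem₁ := gibbs_mem_stdSimplex ⟨x, by simpa⟩
  mem₂ := gibbs_mem_stdSimplex ⟨y, by simpa⟩
  off₁ w hw := gibbs_of_notMem (by simp [hw])
  off₂ w hw := gibbs_of_notMem (by simp [hw])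

lemma exists_boostPotential_add_le (he : ∀ i y, |e i y| ≤ 1) (hδ : 0 ≤ δ) (hδ' : δ ≤ 1)
    (hf : IsWeaklyLearnable f e δ) {x y : Y} (hx : f x = true) (hy : f y = false) (S : Y → ℝ) :
    ∃ i, boostPotential f (δ / 4) (S + e i) ≤
      boostPotential f (δ / 4) S * Real.exp (-(δ ^ 2 / 8)) := by
  obtain ⟨i, hi⟩ := hf _ _ (isSplit_gibbs hx hy (-(δ / 4)) (δ / 4) S S)
  have hη : |δ / 4| ≤ 1 := abs_le.2 ⟨by linarith, by linarith⟩
  refine ⟨i, (mul_le_mul (partitionSum_add_le (by rwa [abs_neg]) (he i))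
    (partitionSum_add_le hη (he i)) partitionSum_nonneg ?_).trans ?_⟩
  · exact mul_nonneg partitionSum_nonneg (Real.exp_pos _).le
  · rw [mul_mul_mul_comm, ← Real.exp_add]
    refine mul_le_mul_of_nonneg_left (Real.exp_le_exp.2 ?_)
      (mul_nonneg partitionSum_nonneg partitionSum_nonneg)
    simp only [sub_mul, Finset.sum_sub_distrib] at hi
    linarith [mul_le_mul_of_nonneg_left hi (by linarith : 0 ≤ δ / 4)]

lemma exists_boostPotential_sum_le (he : ∀ i y, |e i y| ≤ 1) (hδ : 0 ≤ δ) (hδ' : δ ≤ 1)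
    (hf : IsWeaklyLearnable f e δ) {x y : Y} (hx : f x = true) (hy : f y = false) (m : ℕ) :
    ∃ c : Fin m → ι, boostPotential f (δ / 4) (∑ j, e (c j)) ≤
      (Fintype.card Y : ℝ) ^ 2 * Real.exp (-(m * (δ ^ 2 / 8))) := by
  induction m with
  | zero => exact ⟨Fin.elim0, by simpa using boostPotential_zero_le⟩
  | succ m ih =>
    obtain ⟨c, hc⟩ := ih
    obtain ⟨i, hi⟩ := exists_boostPotential_add_le he hδ hδ' hf hx hy (∑ j, e (c j))
    refine ⟨Fin.snoc c i, ?_⟩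
    simp only [Fin.sum_univ_castSucc, Fin.snoc_castSucc, Fin.snoc_last]
    calc _ ≤ _ := hi
      _ ≤ (Fintype.card Y : ℝ) ^ 2 * Real.exp (-(m * (δ ^ 2 / 8))) * Real.exp (-(δ ^ 2 / 8)) := by
        gcongr
      _ = _ := by
        rw [mul_assoc, ← Real.exp_add]
        push_cast
        ring_nf

open Classical in
lemma isSplit_single {x y : Y} (hx : f x = true) (hy : f y = false) :
    IsSplit f (Pi.single x 1) (Pi.single y 1) where
  mem₁ := single_mem_stdSimplex ℝ x
  mem₂ := single_mem_stdSimplex ℝ y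
  off₁ w hw := Pi.single_eq_of_ne (by rintro rfl; simp [hx] at hw) 1
  off₂ w hw := Pi.single_eq_of_ne (by rintro rfl; simp [hy] at hw) 1

lemma IsWeaklyLearnable.le_one (hf : IsWeaklyLearnable f e δ) (he : ∀ i y, e i y ∈ Set.Icc 0 1)
    {x y : Y} (hx : f x = true) (hy : f y = false) : δ ≤ 1 := by
  classical
  obtain ⟨i, hi⟩ := hf _ _ (isSplit_single hx hy)
  simp only [sub_mul, Finset.sum_sub_distrib, Pi.single_apply, ite_mul, one_mul, zero_mul,
    Finset.sum_ite_eq', Finset.mem_univ, if_true] at hi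
  linarith [(he i x).2, (he i y).1]

lemma exists_sum_lt_sum_of_isWeaklyLearnable [Nonempty ι] (he : ∀ i y, |e i y| ≤ 1) (hδ : 0 ≤ δ)
    (hδ' : δ ≤ 1) (hf : IsWeaklyLearnable f e δ) {m : ℕ}
    (hm : (Fintype.card Y : ℝ) ^ 2 * Real.exp (-(m * (δ ^ 2 / 8))) < 1) :
    ∃ c : Fin m → ι, ∀ x y, f x = true → f y = false → ∑ j, e (c j) y < ∑ j, e (c j) x := by
  by_cases h : ∃ x y, f x = true ∧ f y = false
  · obtain ⟨x₀, y₀, hx₀, hy₀⟩ := h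
    obtain ⟨c, hc⟩ := exists_boostPotential_sum_le he hδ hδ' hf hx₀ hy₀ m
    refine ⟨c, fun x y hx hy => lt_of_not_ge fun hxy => ?_⟩
    have h1 := one_le_boostPotential (η := δ / 4) (S := ∑ j, e (c j)) (by linarith) hx hy
      (by simpa only [Finset.sum_apply] using hxy)
    linarith
  · push Not at h
    exact ⟨fun _ => Classical.arbitrary ι, fun x y hx hy => absurd hy (h x y hx)⟩

end Boosting

section GraphVCDimension

variable {V W X Y : Type*} {κ ρ : ℕ}

lemma vcDim_le_iff {D : Set (X → Bool)} {b : ℕ∞} :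
    vcDim D ≤ b ↔ ∀ T : Finset X, Shatters D T → (T.card : ℕ∞) ≤ b :=
  iSup₂_le_iff

lemma Shatters.card_le_vcDim {D : Set (X → Bool)} {T : Finset X} (hT : Shatters D T) :
    (T.card : ℕ∞) ≤ vcDim D :=
  vcDim_le_iff.1 le_rfl T hT

lemma vcDim_image_comp_le (f : W → X) (D : Set (X → Bool)) :
    vcDim ((· ∘ f) '' D) ≤ vcDim D := by
  classical
  refine vcDim_le_iff.2 fun T hT => ?_
  have hinj : Set.InjOn f T := by
    intro x hx x' hx' hxx'
    by_contra hne
    obtain ⟨_, ⟨d, -, rfl⟩, hd⟩ := hT fun w => decide (w = x)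
    have h1 : d (f x) = true := by simpa using hd x hx
    have h2 : d (f x') = false := by simpa [Ne.symm hne] using hd x' hx'
    rw [hxx', h2] at h1
    exact Bool.false_ne_true h1
  have himage : Shatters D (T.image f) := fun p => by
    obtain ⟨_, ⟨d, hd, rfl⟩, hp⟩ := hT (p ∘ f)
    exact ⟨d, hd, by simpa using hp⟩
  simpa only [Finset.card_image_of_injOn hinj] using himage.card_le_vcDim

lemma subsingleton_of_vcDim_eq_zero {D : Set (X → Bool)} (hD : vcDim D = 0) :
    D.Subsingleton := by
  intro d hd d' hd'
  by_contra hne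
  obtain ⟨x, hx⟩ := Function.ne_iff.1 hne
  have hshatter : Shatters D {x} := fun p => by
    rcases Bool.eq_or_eq_not (p x) (d x) with hp | hp
    · exact ⟨d, hd, by simp [hp]⟩
    · exact ⟨d', hd', by simpa [hp] using Bool.eq_not.2 (Ne.symm hx)⟩
  simpa [hD] using hshatter.card_le_vcDim

/-- The unary class obtained from `G` by fixing all but the last argument to `u`. -/
def slice (G : Set ((Fin (κ + 1) → V) → Bool)) (u : Fin κ → V) : Set (V → Bool) :=
  (fun h x => h (Fin.snoc u x)) '' G

lemma vcDim_slice_le (G : Set ((Fin (κ + 1) → V) → Bool)) (u : Fin κ → V) :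
    vcDim (slice G u) ≤ gvcDim (κ + 1) G := by
  induction κ with
  | zero => exact vcDim_image_comp_le (fun x => Fin.snoc u x) G
  | succ κ ih =>
    have hslice : slice G u = slice (proj (u 0) '' G) (Fin.tail u) := by
      simp only [slice, Set.image_image, proj, Fin.cons_snoc_eq_snoc_cons, Fin.cons_self_tail]
    rw [hslice]
    exact (ih _ _).trans (le_iSup (fun v => gvcDim (κ + 1) (proj v '' G)) (u 0))

lemma subsingleton_of_gvcDim_eq_zero {G : Set ((Fin (κ + 1) → V) → Bool)}
    (hG : gvcDim (κ + 1) G = 0) : G.Subsingleton := by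
  intro h hh h' hh'
  funext w
  have hslice : (slice G (Fin.init w)).Subsingleton :=
    subsingleton_of_vcDim_eq_zero (nonpos_iff_eq_zero.1 (hG ▸ vcDim_slice_le G (Fin.init w)))
  have hlast := congrFun (hslice ⟨h, hh, rfl⟩ ⟨h', hh', rfl⟩) (w (Fin.last κ))
  simpa only [Fin.snoc_init_self] using hlast

lemma sum_choose_le_add_one_pow (s ρ : ℕ) : ∑ i ∈ Finset.Iic ρ, s.choose i ≤ (s + 1) ^ ρ := by
  rw [add_pow, ← Nat.range_succ_eq_Iic]
  refine Finset.sum_le_sum fun i hi => ?_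
  have hpos : 0 < ρ.choose i := Nat.choose_pos (Finset.mem_range_succ_iff.1 hi)
  rw [one_pow, mul_one, Nat.cast_id]
  exact (Nat.choose_le_pow s i).trans (Nat.le_mul_of_pos_right _ hpos)

lemma ncard_le_of_vcDim_le [Fintype Y] {D : Set (Y → Bool)} (hD : vcDim D ≤ ρ) :
    D.ncard ≤ (Fintype.card Y + 1) ^ ρ := by
  classical
  let support : (Y → Bool) → Finset Y := fun d => {y | d y = true}
  have hsupport : Function.Injective support := fun d d' h => funext fun y =>
    Bool.eq_iff_iff.2 (by simpa [support] using Finset.ext_iff.1 h y)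
  let 𝒜 : Finset (Finset Y) := D.toFinset.image support
  have hvc : 𝒜.vcDim ≤ ρ := by
    refine Finset.sup_le fun S hS => ?_
    have hshatter : Shatters D S := fun p => by
      obtain ⟨A, hA, hSA⟩ := Finset.mem_shatterer.1 hS (Finset.filter_subset (p · = true) S)
      obtain ⟨d, hd, rfl⟩ := Finset.mem_image.1 hA
      refine ⟨d, Set.mem_toFinset.1 hd, fun y hy => Bool.eq_iff_iff.2 ?_⟩
      simpa [support, hy] using Finset.ext_iff.1 hSA y
    exact_mod_cast hshatter.card_le_vcDim.trans hD
  calc D.ncard = 𝒜.card := by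
        rw [Finset.card_image_of_injective _ hsupport, Set.ncard_eq_toFinset_card']
    _ ≤ 𝒜.shatterer.card := 𝒜.card_le_card_shatterer
    _ ≤ ∑ i ∈ Finset.Iic 𝒜.vcDim, (Fintype.card Y).choose i := Finset.card_shatterer_le_sum_vcDim
    _ ≤ ∑ i ∈ Finset.Iic ρ, (Fintype.card Y).choose i :=
        Finset.sum_le_sum_of_subset (Finset.Iic_subset_Iic.2 hvc)
    _ ≤ (Fintype.card Y + 1) ^ ρ := sum_choose_le_add_one_pow _ ρ

lemma exists_subset_range_of_ncard_le {α : Type*} [Nonempty α] {s : Set α} (hs : s.Finite)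
    {K : ℕ} (hK : s.ncard ≤ K) : ∃ T : Fin K → α, s ⊆ Set.range T := by
  have := hs.fintype
  obtain ⟨f⟩ : Nonempty (s ↪ Fin K) := Function.Embedding.nonempty_of_card_le (by
    rwa [Fintype.card_fin, ← Nat.card_eq_fintype_card, Nat.card_coe_set_eq])
  exact ⟨Function.extend f Subtype.val fun _ => Classical.arbitrary α,
    fun x hx => ⟨f ⟨x, hx⟩, f.injective.extend_apply _ _ _⟩⟩

lemma exists_slice_patterns [Fintype Y] {G : Set ((Fin (κ + 1) → V) → Bool)}
    (hG : gvcDim (κ + 1) G ≤ ρ) (f : Y → V) (u : Fin κ → V) :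
    ∃ T : Fin ((Fintype.card Y + 1) ^ ρ) → Y → Bool,
      ∀ h ∈ G, ∃ i, ∀ y, T i y = h (Fin.snoc u (f y)) := by
  have hvc : vcDim ((· ∘ f) '' slice G u) ≤ ρ :=
    (vcDim_image_comp_le f _).trans ((vcDim_slice_le G u).trans hG)
  obtain ⟨T, hT⟩ := exists_subset_range_of_ncard_le (Set.toFinite _) (ncard_le_of_vcDim_le hvc)
  refine ⟨T, fun h hh => ?_⟩
  obtain ⟨i, hi⟩ := hT ⟨_, ⟨h, hh, rfl⟩, rfl⟩
  exact ⟨i, congrFun hi⟩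

end GraphVCDimension

section ProductExpectation

variable {W : Type*} [Fintype W] {n : ℕ} {p q : W → ℝ} {b η : ℝ}

/-- The expectation of `H` under `n` independent samples from `p`. -/
noncomputable def piExpect (p : W → ℝ) (H : (Fin n → W) → ℝ) : ℝ :=
  ∑ z : Fin n → W, (∏ i, p (z i)) * H z

lemma piExpect_zero (p : W → ℝ) (H : (Fin 0 → W) → ℝ) : piExpect p H = H Fin.elim0 := by
  simp [piExpect, Subsingleton.elim default Fin.elim0]

lemma piExpect_succ (p : W → ℝ) (H : (Fin (n + 1) → W) → ℝ) :
    piExpect p H = ∑ w, p w * piExpect p fun z => H (Fin.cons w z) := by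
  simp only [piExpect, Finset.mul_sum, ← mul_assoc]
  rw [← Fintype.sum_prod_type', ← (Fin.consEquiv fun _ => W).sum_comp]
  simp [Fin.prod_univ_succ, Fin.consEquiv]

lemma sum_mul_piExpect (p q : W → ℝ) (H : W → (Fin n → W) → ℝ) :
    ∑ w, q w * piExpect p (H w) = piExpect p fun z => ∑ w, q w * H w z := by
  simp only [piExpect, Finset.mul_sum]
  rw [Finset.sum_comm]
  exact Finset.sum_congr rfl fun z _ => Finset.sum_congr rfl fun w _ => mul_left_comm ..

lemma abs_sum_mul_le (hp : p ∈ stdSimplex ℝ W) {x : W → ℝ} (hx : ∀ w, |x w| ≤ b) :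
    |∑ w, p w * x w| ≤ b :=
  calc |∑ w, p w * x w| ≤ ∑ w, |p w * x w| := Finset.abs_sum_le_sum_abs _ _
    _ ≤ ∑ w, p w * b := by
        gcongr with w
        rw [abs_mul, abs_of_nonneg (hp.1 w)]
        exact mul_le_mul_of_nonneg_left (hx w) (hp.1 w)
    _ = b := by rw [← Finset.sum_mul, hp.2, one_mul]

lemma abs_piExpect_le (hp : p ∈ stdSimplex ℝ W) {H : (Fin n → W) → ℝ} (hH : ∀ z, |H z| ≤ b) :
    |piExpect p H| ≤ b := by
  induction n with
  | zero => exact (piExpect_zero p H).symm ▸ hH _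
  | succ n ih =>
    rw [piExpect_succ]
    exact abs_sum_mul_le hp fun w => ih fun z => hH _

-- The hybrid argument: the samples are switched from `q` to `p` one at a time.
lemma abs_piExpect_sub_le (hp : p ∈ stdSimplex ℝ W) (hq : q ∈ stdSimplex ℝ W)
    {H : (Fin n → W) → ℝ}
    (hH : ∀ i u, |∑ w, (p w - q w) * H (Function.update u i w)| ≤ η) :
    |piExpect p H - piExpect q H| ≤ n * η := by
  induction n with
  | zero => simp [piExpect_zero]
  | succ n ih =>
    have hhead : |∑ w, (p w - q w) * piExpect p fun z => H (Fin.cons w z)| ≤ η := by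
      rw [sum_mul_piExpect p fun w => p w - q w]
      obtain ⟨w₀⟩ : Nonempty W := not_isEmpty_iff.1 fun _ => by simpa using hp.2
      refine abs_piExpect_le hp fun z => ?_
      simpa only [Fin.update_cons_zero] using hH 0 (Fin.cons w₀ z)
    have htail : |∑ w, q w * (piExpect p (fun z => H (Fin.cons w z)) -
        piExpect q fun z => H (Fin.cons w z))| ≤ n * η :=
      abs_sum_mul_le hq fun w => ih fun i u => by
        simpa only [Fin.cons_update] using hH i.succ (Fin.cons w u)
    calc |piExpect p H - piExpect q H|
        = |∑ w, (p w - q w) * piExpect p (fun z => H (Fin.cons w z)) +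
            ∑ w, q w * (piExpect p (fun z => H (Fin.cons w z)) -
              piExpect q fun z => H (Fin.cons w z))| := by
          rw [piExpect_succ, piExpect_succ, ← Finset.sum_sub_distrib, ← Finset.sum_add_distrib]
          exact congrArg _ (Finset.sum_congr rfl fun w _ => by ring)
      _ ≤ η + n * η := (abs_add_le _ _).trans (add_le_add hhead htail)
      _ = (n + 1 : ℕ) * η := by
          push_cast
          ring

end ProductExpectation

section Symmetric

variable {V : Type*} {k : ℕ} {h : (Fin (k + 1) → V) → Bool}

lemma IsSymmetric.apply_insertNth (hh : IsSymmetric h) (i : Fin (k + 1)) (v : V) (u : Fin k → V) :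
    h (i.insertNth v u) = h (Fin.cons v u) := by
  rw [← hh i.cycleRange.symm, Fin.insertNth_comp_cycleRange_symm]

lemma IsSymmetric.apply_update (hh : IsSymmetric h) (i : Fin (k + 1)) (v : V)
    (w : Fin (k + 1) → V) :
    h (Function.update w i v) = h (Fin.snoc (i.removeNth w) v) := by
  rw [← Fin.insertNth_removeNth, hh.apply_insertNth, ← Fin.insertNth_last', hh.apply_insertNth]

end Symmetric

section Pushforward

variable {V W : Type*} [Fintype W] {k : ℕ} {p : W → ℝ}

open Classical in
/-- The mass function on `V` of `f z` where `z` has mass function `p`. -/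
noncomputable def pushforward (f : W → V) (p : W → ℝ) (v : V) : ℝ :=
  ∑ z, if v = f z then p z else 0

lemma hasSum_pushforward_mul (f : W → V) (p : W → ℝ) (H : V → ℝ) :
    HasSum (fun v => pushforward f p v * H v) (∑ z, p z * H (f z)) := by
  classical
  simp only [pushforward, Finset.sum_mul]
  refine hasSum_sum fun z _ => ?_
  simpa only [if_true] using hasSum_single (f := fun v => (if v = f z then p z else 0) * H v) (f z)
    fun v hv => by simp only [if_neg hv, zero_mul]

lemma isDist_pushforward (f : W → V) (hp : p ∈ stdSimplex ℝ W) : IsDist (pushforward f p) := by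
  classical
  refine ⟨fun v => Finset.sum_nonneg fun z _ => ite_nonneg (hp.1 z) le_rfl, ?_⟩
  simpa only [mul_one, hp.2] using hasSum_pushforward_mul f p fun _ => 1

lemma prod_pushforward (f : W → V) (p : W → ℝ) (w : Fin k → V) :
    ∏ i, pushforward f p (w i) = pushforward (f ∘ ·) (fun z => ∏ i, p (z i)) w := by
  classical
  simp only [pushforward, Finset.prod_univ_sum, Fintype.piFinset_univ, Fintype.prod_ite_zero,
    funext_iff, Function.comp_apply]
  congr!

lemma LP_pushforward (f : W → V) (p : W → ℝ) (h : (Fin k → V) → Bool) :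
    LP (pushforward f p) h = piExpect p fun z => if h (f ∘ z) then 1 else 0 := by
  simp only [LP, prod_pushforward]
  exact (hasSum_pushforward_mul (f ∘ ·) _ fun w => if h w then (1 : ℝ) else 0).tsum_eq

end Pushforward

section IntegralProbabilityMetric

variable {V : Type*} {k l : ℕ} {G : Set ((Fin k → V) → Bool)} {g : (Fin l → V) → Bool}
  {p₁ p₂ : V → ℝ} {b ε : ℝ}

lemma exists_lt_of_lt_IPM (hb : 0 ≤ b) (h : b < IPM G p₁ p₂) :
    ∃ h ∈ G, b < |LP p₁ h - LP p₂ h| := by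
  by_contra! hG
  exact h.not_ge (Real.iSup_le (fun h => Real.iSup_le (hG h) hb) hb)

/-- The IPM of `G` dominates, up to the factor `ε`, the discrepancy measured by `g`. -/
def Dominates (G : Set ((Fin k → V) → Bool)) (ε : ℝ) (g : (Fin l → V) → Bool) : Prop :=
  ∀ p₁ p₂ : V → ℝ, IsDist p₁ → IsDist p₂ → IPM G p₁ p₂ ≥ ε * |LP p₁ g - LP p₂ g|

lemma Dominates.exists_lt (hG : Dominates G ε g) (hp₁ : IsDist p₁) (hp₂ : IsDist p₂)
    (hb : 0 ≤ b) (h : b < ε * |LP p₁ g - LP p₂ g|) : ∃ h ∈ G, b < |LP p₁ h - LP p₂ h| :=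
  exists_lt_of_lt_IPM hb (h.trans_le (hG p₁ p₂ hp₁ hp₂))

end IntegralProbabilityMetric

section PartiteDistinguisher

variable {κ : ℕ} {V X Y : Type*}

/-- The vertices of the hard instance: `κ + 1` disjoint copies of `X`, indexed by their part, and
one copy of `Y`. -/
abbrev Vertex (κ : ℕ) (X Y : Type*) : Type _ := (Fin (κ + 1) × X) ⊕ Y

/-- The vertices seen by the tuple `a`: the vertex `a j` of each part `j`, and all of `Y`. -/
def row (a : Fin (κ + 1) → X) : Fin (κ + 1) ⊕ Y → Vertex κ X Y :=
  Sum.map (fun j => (j, a j)) id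

/-- The transversal `(κ + 2)`-tuple through `y` and the vertices `a j`. -/
def edge (a : Fin (κ + 1) → X) (y : Y) : Fin (κ + 2) → Vertex κ X Y :=
  Fin.cons (Sum.inr y) fun j => Sum.inl (j, a j)

open Classical in
/-- The symmetric distinguisher on `V ⊇ φ '' Vertex κ X Y` that accepts exactly the reorderings of
the transversal tuples `edge a y` with `F a y` true. -/
noncomputable def partite (φ : Vertex κ X Y → V) (F : (Fin (κ + 1) → X) → Y → Bool)
    (w : Fin (κ + 2) → V) : Bool :=
  decide (∃ a y, F a y = true ∧ ∃ σ : Equiv.Perm (Fin (κ + 2)), w ∘ σ = φ ∘ edge a y)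

variable {φ : Vertex κ X Y → V} {F : (Fin (κ + 1) → X) → Y → Bool} {a : Fin (κ + 1) → X}

lemma row_comp_cons (a : Fin (κ + 1) → X) (y : Y) :
    row a ∘ Fin.cons (Sum.inr y) Sum.inl = edge a y :=
  Fin.comp_cons ..

lemma partite_eq_true_iff {w : Fin (κ + 2) → V} : partite φ F w = true ↔
    ∃ a y, F a y = true ∧ ∃ σ : Equiv.Perm (Fin (κ + 2)), w ∘ σ = φ ∘ edge a y := by
  classical
  rw [partite, decide_eq_true_iff]

lemma isSymmetric_partite (φ : Vertex κ X Y → V) (F : (Fin (κ + 1) → X) → Y → Bool) :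
    IsSymmetric (partite φ F) := by
  intro σ w
  refine Bool.eq_iff_iff.2 ?_
  simp only [partite_eq_true_iff, Function.comp_assoc, ← Equiv.Perm.coe_mul]
  exact exists₂_congr fun a y => and_congr_right fun _ =>
    ((Equiv.mulLeft σ).surjective.exists (p := fun τ => w ∘ τ = φ ∘ edge a y)).symm

lemma partite_edge {y : Y} (hy : F a y = true) : partite φ F (φ ∘ edge a y) = true :=
  partite_eq_true_iff.2 ⟨a, y, hy, 1, rfl⟩

lemma exists_of_partite_row (hφ : Function.Injective φ) {z : Fin (κ + 2) → Fin (κ + 1) ⊕ Y}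
    (hz : partite φ F (φ ∘ row a ∘ z) = true) : ∃ i y, z i = Sum.inr y ∧ F a y = true := by
  obtain ⟨b, y, hy, σ, hσ⟩ := partite_eq_true_iff.1 hz
  have hrow : ∀ i, row a (z (σ i)) = edge b y i := fun i => hφ (congrFun hσ i)
  have hinr : z (σ 0) = Sum.inr y := by
    have h0 := hrow 0
    rcases hz0 : z (σ 0) with j | y' <;> simp_all [row, edge]
  have hab : a = b := by
    funext j
    rcases hzj : z (σ j.succ) with j' | y'
    · obtain ⟨rfl, h⟩ : j' = j ∧ a j' = b j := by simpa [hzj, row, edge] using hrow j.succ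
      exact h
    · simpa [hzj, row, edge] using hrow j.succ
  exact ⟨σ 0, y, hinr, hab ▸ hy⟩

/-- The weights on a row that spread mass `1 / (κ + 2)` over `Y` according to `ξ` and put mass
`1 / (κ + 2)` on each of the `κ + 1` remaining vertices. -/
noncomputable def leafWeight (κ : ℕ) (ξ : Y → ℝ) : Fin (κ + 1) ⊕ Y → ℝ :=
  Sum.elim (fun _ => 1 / (κ + 2)) fun y => ξ y / (κ + 2)

/-- The probability that `κ + 2` independent samples from the uniform distribution on a transversal
tuple list it in a prescribed order. -/
noncomputable def edgeMass (κ : ℕ) : ℝ := (1 / (κ + 2)) ^ (κ + 2)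

lemma edgeMass_pos (κ : ℕ) : 0 < edgeMass κ := by
  rw [edgeMass]
  positivity

lemma prod_leafWeight_cons (ξ : Y → ℝ) (y : Y) :
    ∏ i, leafWeight κ ξ ((Fin.cons (Sum.inr y) Sum.inl : Fin (κ + 2) → _) i) =
      ξ y * edgeMass κ := by
  simp only [Fin.prod_univ_succ, Fin.cons_zero, Fin.cons_succ, leafWeight, Sum.elim_inr,
    Sum.elim_inl, Finset.prod_const, Finset.card_univ, Fintype.card_fin, edgeMass]
  ring

variable [Fintype Y] {ξ ξ₁ ξ₂ : Y → ℝ}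

/-- The distribution with weights `leafWeight κ ξ` on the row of `a`. -/
noncomputable def leafDist (φ : Vertex κ X Y → V) (a : Fin (κ + 1) → X) (ξ : Y → ℝ) : V → ℝ :=
  pushforward (φ ∘ row a) (leafWeight κ ξ)

lemma leafWeight_mem_stdSimplex (hξ : ξ ∈ stdSimplex ℝ Y) :
    leafWeight κ ξ ∈ stdSimplex ℝ (Fin (κ + 1) ⊕ Y) := by
  constructor
  · rintro (_ | y)
    · exact div_nonneg zero_le_one (by positivity)
    · exact div_nonneg (hξ.1 y) (by positivity)
  · simp only [leafWeight, Fintype.sum_sum_type, Sum.elim_inl, Sum.elim_inr, ← Finset.sum_div,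
      hξ.2, Finset.sum_const, Finset.card_univ, Fintype.card_fin, nsmul_eq_mul]
    push_cast
    field_simp
    ring

lemma isDist_leafDist (hξ : ξ ∈ stdSimplex ℝ Y) : IsDist (leafDist φ a ξ) :=
  isDist_pushforward _ (leafWeight_mem_stdSimplex hξ)

lemma LP_leafDist_partite_eq_zero (hφ : Function.Injective φ)
    (hoff : ∀ y, F a y = true → ξ y = 0) : LP (leafDist φ a ξ) (partite φ F) = 0 := by
  rw [leafDist, LP_pushforward, piExpect]
  refine Finset.sum_eq_zero fun z _ => ?_
  split_ifs with hz
  · obtain ⟨i, y, hi, hy⟩ := exists_of_partite_row hφ hz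
    rw [Finset.prod_eq_zero (Finset.mem_univ i) (by simp [hi, leafWeight, hoff y hy]), zero_mul]
  · exact mul_zero _

lemma edgeMass_le_LP_leafDist_partite (hξ : ξ ∈ stdSimplex ℝ Y)
    (hoff : ∀ y, F a y = false → ξ y = 0) :
    edgeMass κ ≤ LP (leafDist φ a ξ) (partite φ F) := by
  have hw := (leafWeight_mem_stdSimplex (κ := κ) hξ).1
  let tuple : Y ↪ (Fin (κ + 2) → Fin (κ + 1) ⊕ Y) :=
    ⟨fun y => Fin.cons (Sum.inr y) Sum.inl, fun y y' h => Sum.inr_injective (Fin.cons_inj.1 h).1⟩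
  let term : (Fin (κ + 2) → Fin (κ + 1) ⊕ Y) → ℝ := fun z =>
    (∏ i, leafWeight κ ξ (z i)) * if partite φ F (φ ∘ row a ∘ z) then 1 else 0
  have hterm : ∀ z, 0 ≤ term z := fun z =>
    mul_nonneg (Finset.prod_nonneg fun _ _ => hw _) (by positivity)
  have htuple : ∀ y, term (tuple y) = ξ y * edgeMass κ := by
    intro y
    change (∏ i, leafWeight κ ξ ((Fin.cons (Sum.inr y) Sum.inl : Fin (κ + 2) → _) i)) *
      (if partite φ F (φ ∘ row a ∘ Fin.cons (Sum.inr y) Sum.inl) then 1 else 0) = _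
    rw [prod_leafWeight_cons, row_comp_cons]
    cases hy : F a y with
    | false => simp [hoff y hy]
    | true => simp [partite_edge hy]
  calc edgeMass κ = ∑ z ∈ Finset.univ.map tuple, term z := by
        simp only [Finset.sum_map, htuple, ← Finset.sum_mul, hξ.2, one_mul]
    _ ≤ ∑ z, term z := Finset.sum_le_univ_sum_of_nonneg hterm
    _ = LP (leafDist φ a ξ) (partite φ F) := by rw [leafDist, LP_pushforward]; rfl

lemma abs_LP_leafDist_sub_le {h : (Fin (κ + 1) → V) → Bool} (hh : IsSymmetric h)
    (hξ₁ : ξ₁ ∈ stdSimplex ℝ Y) (hξ₂ : ξ₂ ∈ stdSimplex ℝ Y) {η : ℝ}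
    (hη : ∀ u : Fin κ → Fin (κ + 1) ⊕ Y, |∑ y, (ξ₁ y - ξ₂ y) *
      (if h (Fin.snoc (φ ∘ row a ∘ u) (φ (Sum.inr y))) then 1 else 0)| ≤ η) :
    |LP (leafDist φ a ξ₁) h - LP (leafDist φ a ξ₂) h| ≤ η := by
  have hη0 : 0 ≤ η := (abs_nonneg _).trans (hη fun _ => Sum.inl 0)
  have hhybrid : |LP (leafDist φ a ξ₁) h - LP (leafDist φ a ξ₂) h| ≤
      (κ + 1 : ℕ) * (η / (κ + 2)) := by
    rw [leafDist, leafDist, LP_pushforward, LP_pushforward]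
    refine abs_piExpect_sub_le (leafWeight_mem_stdSimplex hξ₁) (leafWeight_mem_stdSimplex hξ₂)
      fun i u => ?_
    simp only [Function.comp_update, hh.apply_update]
    simp only [leafWeight, Fintype.sum_sum_type, Sum.elim_inl, Sum.elim_inr, sub_self, zero_mul,
      Finset.sum_const_zero, zero_add, ← sub_div, div_mul_eq_mul_div, ← Finset.sum_div, abs_div]
    rw [abs_of_nonneg (by positivity : (0 : ℝ) ≤ κ + 2)]
    gcongr
    exact hη (i.removeNth u)
  calc _ ≤ (κ + 1 : ℕ) * (η / (κ + 2)) := hhybrid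
    _ ≤ (κ + 2) * (η / (κ + 2)) := by
        gcongr
        push_cast
        linarith
    _ = η := by field_simp

end PartiteDistinguisher

section Decoding

variable {κ K m ρ : ℕ} {V X Y : Type*}

/-- `F` is decodable by the scheme `N` if, for one global table `T` and a code word `c` for each
row `a`, the symbols `N T a c y` determine the row `F a`. Few families are decodable when tables,
code words and symbols are few. -/
def Decodable {A B C τ : Type*} (N : τ → A → C → Y → B) (F : A → Y → Bool) : Prop :=
  ∃ T, ∀ a, ∃ c, (F a).FactorsThrough (N T a c)

/-- The scheme whose table is a `(κ + 1)`-ary Boolean function and whose symbol at `y` lists its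
values on all tuples of vertices of `edge a y`. -/
def edgePattern (T : (Fin (κ + 1) → Vertex κ X Y) → Bool) (a : Fin (κ + 1) → X) (_ : Unit) (y : Y) :
    (Fin (κ + 1) → Fin (κ + 2)) → Bool :=
  fun z => T (edge a y ∘ z)

/-- A voter in a row: the vertices at which all arguments but the last are fixed, the number of a
pattern in the table for these vertices, and whether the vote is inverted. -/
abbrev Voter (κ K : ℕ) (Y : Type*) : Type _ := (Fin κ → Fin (κ + 1) ⊕ Y) × Fin K × Bool

/-- The vote of `v` on `y` in the row of `a`, for the table of patterns `T`. -/
def vote (T : (Fin κ → Vertex κ X Y) → Fin K → Y → Bool) (a : Fin (κ + 1) → X) (v : Voter κ K Y)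
    (y : Y) : Bool :=
  xor (T (row a ∘ v.1) v.2.1 y) v.2.2

/-- The scheme whose code words are tuples of `m` voters and whose symbol at `y` is the number of
votes in favour of `y`. -/
def voteCount (T : (Fin κ → Vertex κ X Y) → Fin K → Y → Bool) (a : Fin (κ + 1) → X)
    (c : Fin m → Voter κ K Y) (y : Y) : Fin (m + 1) :=
  ⟨Finset.card {j | vote T a (c j) y = true}, Nat.lt_succ_of_le (card_finset_fin_le _)⟩

variable {φ : Vertex κ X Y → V} {F : (Fin (κ + 1) → X) → Y → Bool} {a : Fin (κ + 1) → X}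

lemma Decodable.of_const {A B C τ : Type*} [Nonempty τ] [Nonempty C] {N : τ → A → C → Y → B}
    {F : A → Y → Bool} (hF : ∀ a x y, F a x = true → F a y = true) : Decodable N F :=
  ⟨Classical.arbitrary τ, fun a => ⟨Classical.arbitrary C, fun x y _ =>
    Bool.eq_iff_iff.2 ⟨hF a x y, hF a y x⟩⟩⟩

lemma factorsThrough_voteCount {T : (Fin κ → Vertex κ X Y) → Fin K → Y → Bool}
    {f : Y → Bool} {c : Fin m → Voter κ K Y}
    (hc : ∀ x y, f x = true → f y = false →
      ∑ j, (if vote T a (c j) y then (1 : ℝ) else 0) < ∑ j, if vote T a (c j) x then 1 else 0) :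
    f.FactorsThrough (voteCount T a c) := by
  have hlt : ∀ x y, f x = true → f y = false → voteCount T a c y < voteCount T a c x := by
    simpa only [Finset.sum_boole, Nat.cast_lt, voteCount, Fin.mk_lt_mk] using hc
  intro x y hxy
  cases hx : f x <;> cases hy : f y
  exacts [rfl, absurd hxy (hlt y x hy hx).ne, absurd hxy (hlt x y hx hy).ne', rfl]

variable {ε : ℝ} {G : Set ((Fin (κ + 1) → V) → Bool)}

open Classical in
lemma leafDist_single [Fintype Y] (φ : Vertex κ X Y → V) (a : Fin (κ + 1) → X) (y : Y) :
    leafDist φ a (Pi.single y 1) = pushforward (φ ∘ edge a y) fun _ => 1 / (κ + 2) := by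
  funext v
  rw [leafDist, pushforward, pushforward, Fintype.sum_sum_type, Fin.sum_univ_succ (n := κ + 1),
    add_comm]
  congr 1
  rw [Finset.sum_eq_single y (fun y' _ hy' => by simp [leafWeight, hy']) (by simp)]
  simp [leafWeight, row, edge]

lemma edgeMass_le_abs_LP_leafDist_sub [Fintype Y] (hφ : Function.Injective φ)
    {ξ₁ ξ₂ : Y → ℝ} (hξ : IsSplit (F a) ξ₁ ξ₂) :
    edgeMass κ ≤ |LP (leafDist φ a ξ₁) (partite φ F) - LP (leafDist φ a ξ₂) (partite φ F)| := by
  rw [LP_leafDist_partite_eq_zero hφ hξ.off₂, sub_zero]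
  exact (edgeMass_le_LP_leafDist_partite hξ.mem₁ hξ.off₁).trans (le_abs_self _)

lemma decodable_edgePattern_of_dominates [Finite Y] (hφ : Function.Injective φ)
    (hG : G.Subsingleton) (hε : 0 < ε) (hdom : Dominates G ε (partite φ F)) :
    Decodable edgePattern F := by
  classical
  cases nonempty_fintype Y
  obtain ⟨T, hT⟩ : ∃ T : (Fin (κ + 1) → Vertex κ X Y) → Bool, ∀ h ∈ G, T = fun z => h (φ ∘ z) := by
    rcases hG.eq_empty_or_singleton with rfl | ⟨h, rfl⟩
    · exact ⟨fun _ => true, by simp⟩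
    · exact ⟨fun z => h (φ ∘ z), by simp⟩
  refine ⟨T, fun a => ⟨(), fun x y hxy => ?_⟩⟩
  by_contra hne
  wlog hx : F a x = true generalizing x y
  · exact this y x hxy.symm (Ne.symm hne) (by simp_all)
  have hsplit := isSplit_single hx (by simp_all : F a y = false)
  obtain ⟨h, hh, hlt⟩ := hdom.exists_lt (isDist_leafDist (φ := φ) (a := a) hsplit.mem₁)
    (isDist_leafDist hsplit.mem₂) le_rfl
    (mul_pos hε ((edgeMass_pos κ).trans_le (edgeMass_le_abs_LP_leafDist_sub hφ hsplit)))
  obtain rfl := hT h hh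
  refine hlt.ne' (abs_eq_zero.2 (sub_eq_zero.2 ?_))
  rw [leafDist_single, leafDist_single, LP_pushforward, LP_pushforward]
  exact congrArg _ (funext fun z =>
    if_congr (Bool.eq_iff_iff.1 (congrFun hxy z)) rfl rfl)

lemma exists_context_of_dominates [Fintype Y] (hφ : Function.Injective φ)
    (hG : IsDistinguishingClass G) (hε : 0 < ε) (hdom : Dominates G ε (partite φ F))
    {ξ₁ ξ₂ : Y → ℝ} (hξ : IsSplit (F a) ξ₁ ξ₂) :
    ∃ h ∈ G, ∃ u : Fin κ → Fin (κ + 1) ⊕ Y, ε * edgeMass κ / 2 < |∑ y, (ξ₁ y - ξ₂ y) *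
      if h (Fin.snoc (φ ∘ row a ∘ u) (φ (Sum.inr y))) then 1 else 0| := by
  have hpos := mul_pos hε (edgeMass_pos κ)
  obtain ⟨h, hh, hlt⟩ := hdom.exists_lt (b := ε * edgeMass κ / 2)
    (isDist_leafDist (φ := φ) (a := a) hξ.mem₁) (isDist_leafDist hξ.mem₂) (by positivity)
    ((half_lt_self hpos).trans_le
      (mul_le_mul_of_nonneg_left (edgeMass_le_abs_LP_leafDist_sub hφ hξ) hε.le))
  refine ⟨h, hh, ?_⟩
  by_contra! hle
  exact hlt.not_ge (abs_LP_leafDist_sub_le (hG h hh) hξ.mem₁ hξ.mem₂ hle)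

lemma isWeaklyLearnable_vote [Fintype Y] (hφ : Function.Injective φ)
    (hG : IsDistinguishingClass G) (hε : 0 < ε) (hdom : Dominates G ε (partite φ F))
    {T : (Fin κ → Vertex κ X Y) → Fin K → Y → Bool}
    (hT : ∀ w, ∀ h ∈ G, ∃ i, ∀ y, T w i y = h (Fin.snoc (φ ∘ w) (φ (Sum.inr y)))) :
    IsWeaklyLearnable (F a) (fun v y => if vote T a v y then 1 else 0) (ε * edgeMass κ / 2) := by
  intro ξ₁ ξ₂ hξ
  obtain ⟨h, hh, u, hu⟩ := exists_context_of_dominates hφ hG hε hdom hξ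
  obtain ⟨i, hi⟩ := hT (row a ∘ u) h hh
  simp only [← hi] at hu
  rcases lt_abs.1 hu with hu | hu
  · exact ⟨(u, i, false), by simpa [vote] using hu.le⟩
  · have hzero : ∑ y, (ξ₁ y - ξ₂ y) = 0 := by
      rw [Finset.sum_sub_distrib, hξ.mem₁.2, hξ.mem₂.2, sub_self]
    refine ⟨(u, i, true), hu.le.trans_eq ?_⟩
    calc -∑ y, (ξ₁ y - ξ₂ y) * (if T (row a ∘ u) i y then 1 else 0)
        = ∑ y, ((ξ₁ y - ξ₂ y) - (ξ₁ y - ξ₂ y) * if T (row a ∘ u) i y then 1 else 0) := by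
          rw [Finset.sum_sub_distrib, hzero, zero_sub]
      _ = ∑ y, (ξ₁ y - ξ₂ y) * if vote T a (u, i, true) y then 1 else 0 :=
          Finset.sum_congr rfl fun y _ => by cases hy : T (row a ∘ u) i y <;> simp [vote, hy]

lemma decodable_voteCount_of_dominates [Fintype Y] (hφ : Function.Injective φ)
    (hG : IsDistinguishingClass G) (hε : 0 < ε) (hε' : ε * edgeMass κ / 2 ≤ 1)
    (hdom : Dominates G ε (partite φ F)) (hρ : gvcDim (κ + 1) G ≤ ρ)
    (hm : (Fintype.card Y : ℝ) ^ 2 *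
      Real.exp (-(m * ((ε * edgeMass κ / 2) ^ 2 / 8))) < 1) :
    Decodable (voteCount (K := (Fintype.card Y + 1) ^ ρ) (m := m)) F := by
  choose T hT using fun w => exists_slice_patterns hρ (fun y => φ (Sum.inr y)) (φ ∘ w)
  have : NeZero ((Fintype.card Y + 1) ^ ρ) := ⟨by positivity⟩
  refine ⟨T, fun a => ?_⟩
  obtain ⟨c, hc⟩ := exists_sum_lt_sum_of_isWeaklyLearnable
    (e := fun v y => if vote T a v y then (1 : ℝ) else 0) (fun v y => by split_ifs <;> simp)
    (mul_pos hε (edgeMass_pos κ) |>.le |> (div_nonneg · zero_le_two)) hε'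
    (isWeaklyLearnable_vote hφ hG hε hdom hT) hm
  exact ⟨c, factorsThrough_voteCount (by simpa only [Finset.sum_apply] using hc)⟩

end Decoding

section Counting

variable {κ : ℕ} {X Y : Type*}

lemma ncard_decodable_le {A B C τ Y : Type*} [Finite A] [Finite B] [Finite C] [Finite τ]
    (N : τ → A → C → Y → B) :
    {F : A → Y → Bool | Decodable N F}.ncard ≤
      Nat.card τ * (Nat.card C * 2 ^ Nat.card B) ^ Nat.card A := by
  have hrange : {F | Decodable N F} ⊆ Set.range fun d : τ × (A → C × (B → Bool)) =>
      fun a => (d.2 a).2 ∘ N d.1 a (d.2 a).1 := by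
    rintro F ⟨T, hT⟩
    choose c hc using hT
    exact ⟨(T, fun a => (c a, Function.extend (N T a (c a)) (F a) fun _ => false)),
      funext fun a => funext ((hc a).extend_apply fun _ => false)⟩
  calc _ ≤ _ := Set.ncard_le_ncard hrange (Set.finite_range _)
    _ ≤ Nat.card (τ × (A → C × (B → Bool))) := by
        rw [← Nat.card_coe_set_eq]
        exact Finite.card_range_le _
    _ = _ := by simp [Nat.card_prod, Nat.card_fun]

lemma exists_forall_notMem_of_ncard_le {ι α : Type*} [Fintype ι] {S : ι → Set α} {b : ℕ}
    (hS : ∀ i, (S i).ncard ≤ b) (hb : Fintype.card ι * b < Nat.card α) : ∃ x, ∀ i, x ∉ S i := by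
  by_contra! hall
  have huniv : ⋃ i, S i = Set.univ := Set.eq_univ_of_forall fun x => Set.mem_iUnion.2 (hall x)
  refine hb.not_ge ?_
  calc Nat.card α = (⋃ i, S i).ncard := by rw [huniv, Set.ncard_univ]
    _ ≤ ∑ i, (S i).ncard := Set.ncard_iUnion_le_of_fintype S
    _ ≤ Fintype.card ι * b := Finset.sum_le_card_nsmul _ _ _ fun i _ => hS i

lemma card_vertex_le [Finite X] [Finite Y] (hXY : Nat.card Y ≤ Nat.card X) :
    Nat.card (Vertex κ X Y) ≤ (κ + 2) * Nat.card X := by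
  simp only [Nat.card_sum, Nat.card_prod, Nat.card_fin]
  linarith

lemma ncard_decodable_edgePattern_le [Finite X] [Finite Y] (hXY : Nat.card Y ≤ Nat.card X) :
    {F | Decodable (edgePattern (κ := κ) (X := X) (Y := Y)) F}.ncard ≤
      2 ^ (((κ + 2) ^ (κ + 1) + 2 ^ (κ + 2) ^ (κ + 1)) * Nat.card X ^ (κ + 1)) := by
  have hV : Nat.card (Vertex κ X Y) ^ (κ + 1) ≤ (κ + 2) ^ (κ + 1) * Nat.card X ^ (κ + 1) := by
    rw [← mul_pow]
    exact Nat.pow_le_pow_left (card_vertex_le hXY) _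
  refine (ncard_decodable_le _).trans ?_
  simp only [Nat.card_fun, Nat.card_eq_fintype_card (α := Bool), Fintype.card_bool, Nat.card_fin,
    Nat.card_unique, one_mul, ← pow_mul, ← pow_add, add_mul]
  gcongr
  exact one_le_two

lemma ncard_decodable_voteCount_le [Finite X] [Finite Y] {K m q r : ℕ}
    (hXY : Nat.card Y ≤ Nat.card X) (hY : κ + 1 + Nat.card Y ≤ 2 ^ r) (hK : K ≤ 2 ^ q) :
    {F | Decodable (voteCount (κ := κ) (X := X) (Y := Y) (K := K) (m := m)) F}.ncard ≤
      2 ^ (Nat.card Y * K * ((κ + 2) * Nat.card X) ^ κ +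
        ((r * κ + (q + 1)) * m + (m + 1)) * Nat.card X ^ (κ + 1)) := by
  have hvoter : Nat.card (Voter κ K Y) ≤ 2 ^ (r * κ + (q + 1)) := by
    rw [Nat.card_prod, Nat.card_prod, Nat.card_fun, Nat.card_sum, Nat.card_fin, Nat.card_fin,
      Nat.card_fin, Nat.card_eq_fintype_card (α := Bool), Fintype.card_bool, pow_add, pow_mul,
      pow_succ]
    gcongr
  refine (ncard_decodable_le _).trans ?_
  have hV := card_vertex_le (κ := κ) hXY
  calc _ = 2 ^ (Nat.card Y * K * Nat.card (Vertex κ X Y) ^ κ) *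
        (Nat.card (Voter κ K Y) ^ m * 2 ^ (m + 1)) ^ Nat.card X ^ (κ + 1) := by
        simp only [Nat.card_fun, Nat.card_fin, Nat.card_eq_fintype_card (α := Bool),
          Fintype.card_bool, ← pow_mul]
    _ ≤ 2 ^ (Nat.card Y * K * ((κ + 2) * Nat.card X) ^ κ) *
        ((2 ^ (r * κ + (q + 1))) ^ m * 2 ^ (m + 1)) ^ Nat.card X ^ (κ + 1) := by
        gcongr
        exact one_le_two
    _ = _ := by rw [← pow_mul, ← pow_add, ← pow_mul, ← pow_add]

lemma ncard_decodable_voteCount_le_two_pow [Finite X] [Finite Y] {t r R B ρ m : ℕ}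
    (hY : Nat.card Y = 4 * t) (hX : 4 * (κ + 2) ^ κ * (Nat.card Y + 1) ^ R ≤ Nat.card X)
    (hXY : Nat.card Y ≤ Nat.card X) (hr : κ + 1 + Nat.card Y ≤ 2 ^ r)
    (hB : B * ((κ + 1) * r + 2) + 1 ≤ t) (hρ : ρ ≤ R) (hmB : m ≤ B) (hmρ : m * ρ ≤ B) :
    {F | Decodable (voteCount (κ := κ) (X := X) (Y := Y) (K := (Nat.card Y + 1) ^ ρ) (m := m))
      F}.ncard ≤ 2 ^ (2 * t * Nat.card X ^ (κ + 1)) := by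
  have hK : (Nat.card Y + 1) ^ ρ ≤ 2 ^ (r * ρ) := by
    rw [pow_mul]
    exact Nat.pow_le_pow_left (by omega) ρ
  have htable : Nat.card Y * (Nat.card Y + 1) ^ ρ * ((κ + 2) * Nat.card X) ^ κ ≤
      t * Nat.card X ^ (κ + 1) := by
    calc _ ≤ Nat.card Y * (Nat.card Y + 1) ^ R * ((κ + 2) * Nat.card X) ^ κ := by
          gcongr
          exact Nat.le_add_left ..
      _ = t * (4 * (κ + 2) ^ κ * (Nat.card Y + 1) ^ R * Nat.card X ^ κ) := by
          rw [mul_pow]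
          nth_rw 1 [hY]
          ring
      _ ≤ t * (Nat.card X * Nat.card X ^ κ) := by gcongr
      _ = t * Nat.card X ^ (κ + 1) := by rw [pow_succ']
  have hcode : (r * κ + (r * ρ + 1)) * m + (m + 1) ≤ t := by
    calc (r * κ + (r * ρ + 1)) * m + (m + 1) = m * (r * κ + 2) + r * (m * ρ) + 1 := by ring
      _ ≤ B * (r * κ + 2) + r * B + 1 := by gcongr
      _ = B * ((κ + 1) * r + 2) + 1 := by ring
      _ ≤ t := hB
  refine (ncard_decodable_voteCount_le hXY hr hK).trans (Nat.pow_le_pow_right two_pos ?_)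
  calc _ ≤ t * Nat.card X ^ (κ + 1) + t * Nat.card X ^ (κ + 1) :=
        add_le_add htable (Nat.mul_le_mul_right _ hcode)
    _ = 2 * t * Nat.card X ^ (κ + 1) := by ring

/-- `F` can be decoded neither from the edge patterns nor, for any dimension `1 ≤ ρ ≤ R`, from the
vote counts of `B / ρ` voters choosing among as many patterns as a class of VC dimension `ρ` has. -/
def IsUndecodable [Fintype Y] (R B : ℕ) (F : (Fin (κ + 1) → X) → Y → Bool) : Prop :=
  ¬Decodable edgePattern F ∧ ∀ ρ, 1 ≤ ρ → ρ ≤ R →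
    ¬Decodable (voteCount (K := (Fintype.card Y + 1) ^ ρ) (m := B / ρ)) F

lemma exists_isUndecodable [Fintype X] [Fintype Y] {t r R B : ℕ}
    (hY : Fintype.card Y = 4 * t) (hX : 4 * (κ + 2) ^ κ * (Fintype.card Y + 1) ^ R ≤ Fintype.card X)
    (hXY : Fintype.card Y ≤ Fintype.card X) (hr : κ + 1 + Fintype.card Y ≤ 2 ^ r)
    (hedge : (κ + 2) ^ (κ + 1) + 2 ^ (κ + 2) ^ (κ + 1) ≤ 2 * t)
    (hB : B * ((κ + 1) * r + 2) + 1 ≤ t) (hR : R < 2 * t) :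
    ∃ F : (Fin (κ + 1) → X) → Y → Bool, IsUndecodable R B F := by
  simp only [← Nat.card_eq_fintype_card] at hY hX hXY hr
  set Z := Nat.card X ^ (κ + 1) with hZ
  let bad : Fin (R + 1) → Set ((Fin (κ + 1) → X) → Y → Bool) := Fin.cons
    {F | Decodable edgePattern F}
    fun i => {F | Decodable (voteCount (K := (Nat.card Y + 1) ^ (i.val + 1)) (m := B / (i + 1))) F}
  have hbad : ∀ i, (bad i).ncard ≤ 2 ^ (2 * t * Z) := by
    refine Fin.cases ?_ fun i => ?_
    · exact (ncard_decodable_edgePattern_le hXY).trans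
        (Nat.pow_le_pow_right two_pos (Nat.mul_le_mul_right _ hedge))
    · exact ncard_decodable_voteCount_le_two_pow hY hX hXY hr hB i.isLt (Nat.div_le_self ..)
        (Nat.div_mul_le_self ..)
  have hX0 : 0 < Nat.card X := lt_of_lt_of_le (by positivity) hX
  have hcard : Fintype.card (Fin (R + 1)) * 2 ^ (2 * t * Z) <
      Nat.card ((Fin (κ + 1) → X) → Y → Bool) := by
    calc Fintype.card (Fin (R + 1)) * 2 ^ (2 * t * Z)
        < 2 ^ (2 * t * Z) * 2 ^ (2 * t * Z) := by
          gcongr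
          calc Fintype.card (Fin (R + 1)) ≤ 2 * t := by rwa [Fintype.card_fin]
            _ ≤ 2 * t * Z := Nat.le_mul_of_pos_right _ (by positivity)
            _ < 2 ^ (2 * t * Z) := Nat.lt_two_pow_self
      _ = Nat.card ((Fin (κ + 1) → X) → Y → Bool) := by
          simp only [Nat.card_fun, Nat.card_fin, Nat.card_eq_fintype_card (α := Bool),
            Fintype.card_bool, hY, ← hZ]
          ring
  obtain ⟨F, hF⟩ := exists_forall_notMem_of_ncard_le hbad hcard
  refine ⟨F, hF 0, fun ρ hρ hρR => ?_⟩
  obtain ⟨i, rfl⟩ := Nat.exists_eq_add_of_le' hρ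
  rw [← Nat.card_eq_fintype_card]
  exact hF (Fin.succ ⟨i, hρR⟩)

end Counting

section LowerBound

variable {κ : ℕ} {V X Y : Type*} {φ : Vertex κ X Y → V}
  {F : (Fin (κ + 1) → X) → Y → Bool} {G : Set ((Fin (κ + 1) → V) → Bool)} {ε : ℝ}

lemma mul_edgeMass_div_two_le_one_of_dominates [Finite Y] {ρ : ℕ} (hφ : Function.Injective φ)
    (hG : IsDistinguishingClass G) (hε : 0 < ε) (hdom : Dominates G ε (partite φ F))
    (hρ : gvcDim (κ + 1) G ≤ ρ) (hF : ¬Decodable edgePattern F) : ε * edgeMass κ / 2 ≤ 1 := by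
  cases nonempty_fintype Y
  choose T hT using fun w => exists_slice_patterns hρ (fun y => φ (Sum.inr y)) (φ ∘ w)
  by_contra hlt
  refine hF (Decodable.of_const fun a x y hx => ?_)
  by_contra hy
  exact hlt ((isWeaklyLearnable_vote hφ hG hε hdom hT).le_one
    (fun v y => by split_ifs <;> simp) hx (Bool.eq_false_iff.2 hy))

lemma sq_mul_exp_neg_lt_one {s r : ℕ} {x : ℝ} (hr : 1 ≤ r) (hs : s ≤ 2 ^ r) (hx : 2 * r ≤ x) :
    (s : ℝ) ^ 2 * Real.exp (-x) < 1 := by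
  have hs_lt : (s : ℝ) < Real.exp r := by
    calc (s : ℝ) ≤ 2 ^ r := mod_cast hs
      _ < Real.exp 1 ^ r := by
          gcongr
          exact lt_trans (by norm_num) Real.exp_one_gt_d9
      _ = Real.exp r := by rw [← Real.exp_nat_mul, mul_one]
  calc (s : ℝ) ^ 2 * Real.exp (-x) ≤ (s : ℝ) ^ 2 * Real.exp (-(2 * r)) := by gcongr
    _ < Real.exp r ^ 2 * Real.exp (-(2 * r)) := by gcongr
    _ = 1 := by rw [← Real.exp_nat_mul, ← Real.exp_add]; simp

lemma le_of_dominates_of_isUndecodable [Fintype Y] {ρ D r : ℕ} (hr : 1 ≤ r)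
    (hY : Fintype.card Y ≤ 2 ^ r) (hF : IsUndecodable (D * r) (17 * D * r ^ 2) F)
    (hφ : Function.Injective φ) (hG : IsDistinguishingClass G) (hε : 0 < ε)
    (hdom : Dominates G ε (partite φ F))
    (hρ : gvcDim (κ + 1) G ≤ ρ) : D * r * (ε * edgeMass κ / 2) ^ 2 ≤ ρ := by
  have hδ_pos := mul_pos hε (edgeMass_pos κ)
  have hδ := mul_edgeMass_div_two_le_one_of_dominates hφ hG hε hdom hρ hF.1
  set δ := ε * edgeMass κ / 2
  by_contra! hlt
  rcases Nat.eq_zero_or_pos ρ with rfl | hρ_pos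
  · refine hF.1 (decodable_edgePattern_of_dominates hφ ?_ hε hdom)
    exact subsingleton_of_gvcDim_eq_zero (nonpos_iff_eq_zero.1 (mod_cast hρ))
  have hρ_le : ρ ≤ D * r := by
    have : (ρ : ℝ) < D * r := hlt.trans_le (mul_le_of_le_one_right (by positivity)
      (pow_le_one₀ (by positivity) hδ))
    exact_mod_cast this.le
  refine hF.2 ρ hρ_pos hρ_le (decodable_voteCount_of_dominates hφ hG hε hδ hdom hρ ?_)
  refine sq_mul_exp_neg_lt_one hr hY ?_
  set m := 17 * D * r ^ 2 / ρ
  have hD : (0 : ℝ) < D * r := by exact_mod_cast hρ_pos.trans_le hρ_le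
  have hm : 17 * r ≤ (m + 1) * δ ^ 2 := by
    refine le_of_mul_le_mul_left ?_ hD
    calc (D * r : ℝ) * (17 * r) = (17 * D * r ^ 2 : ℕ) := by push_cast; ring
      _ ≤ ((m + 1) * ρ : ℕ) := by
          exact_mod_cast (Nat.lt_mul_of_div_lt (Nat.lt_succ_self m) hρ_pos).le
      _ ≤ (m + 1) * (D * r * δ ^ 2) := by
          push_cast
          gcongr
      _ = D * r * ((m + 1) * δ ^ 2) := by ring
  have hr' : (1 : ℝ) ≤ r := by exact_mod_cast hr
  have hδ_sq : δ ^ 2 ≤ 1 := pow_le_one₀ (by positivity) hδ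
  change 2 * r ≤ m * (δ ^ 2 / 8)
  linarith

end LowerBound

section Parameters

open Filter

lemma eventually_add_four_mul_pow_le (c d : ℕ) : ∀ᶠ r in atTop, (c + 4 * r ^ 4) ^ d ≤ 2 ^ r := by
  have hlim : ∀ᶠ r : ℕ in atTop, (r : ℝ) ^ (5 * d) / 2 ^ r < 1 :=
    (tendsto_pow_const_div_const_pow_of_one_lt (5 * d) one_lt_two).eventually_lt_const one_pos
  filter_upwards [hlim, eventually_ge_atTop (c + 5)] with r hr hcr
  rw [div_lt_one (by positivity)] at hr
  have hc : c ≤ r ^ 4 := (by omega : c ≤ r).trans (Nat.le_self_pow (by norm_num) r)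
  calc (c + 4 * r ^ 4) ^ d ≤ (r ^ 4 * r) ^ d := by
        gcongr
        nlinarith [Nat.mul_le_mul_left (r ^ 4) (by omega : 5 ≤ r)]
    _ = r ^ (5 * d) := by rw [pow_mul, ← pow_succ]
    _ ≤ 2 ^ r := by exact_mod_cast hr.le

lemma eventually_mul_sq_mul_add_le_pow_four (a b c : ℕ) :
    ∀ᶠ r : ℕ in atTop, a * r ^ 2 * (b * r + c) + 1 ≤ r ^ 4 := by
  filter_upwards [eventually_ge_atTop (a * (b + c) + 1)] with r hr
  have hr_pos : 1 ≤ r := le_of_add_le_right hr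
  calc a * r ^ 2 * (b * r + c) + 1 ≤ a * r ^ 2 * (b * r + c * r) + r ^ 3 := by
        gcongr
        · exact Nat.le_mul_of_pos_right c hr_pos
        · exact Nat.one_le_pow _ _ hr_pos
    _ = (a * (b + c) + 1) * r ^ 3 := by ring
    _ ≤ r * r ^ 3 := by gcongr
    _ = r ^ 4 := by ring

lemma le_and_mul_add_le_pow {κ s R M : ℕ} (hR : 1 ≤ R) (hs : 4 * (κ + 2) ^ (κ + 1) ≤ s)
    (hM : M = 4 * (κ + 2) ^ κ * (s + 1) ^ R) : s ≤ M ∧ (κ + 1) * M + s ≤ (s + 1) ^ (2 * R) := by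
  have hsM : s ≤ M := by
    calc s ≤ (s + 1) ^ R := s.le_succ.trans (Nat.le_self_pow (by omega) _)
      _ ≤ M := hM ▸ Nat.le_mul_of_pos_left _ (by positivity)
  refine ⟨hsM, ?_⟩
  calc (κ + 1) * M + s ≤ (κ + 1) * M + M := by gcongr
    _ = 4 * (κ + 2) ^ (κ + 1) * (s + 1) ^ R := by rw [hM]; ring
    _ ≤ (s + 1) ^ R * (s + 1) ^ R := by
        gcongr
        exact hs.trans (s.le_succ.trans (Nat.le_self_pow (by omega) _))
    _ = (s + 1) ^ (2 * R) := by rw [two_mul, pow_add]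

lemma eventually_exists_isUndecodable (κ : ℕ) {D : ℕ} (hD : 1 ≤ D) :
    ∀ᶠ r : ℕ in atTop, ∃ M s : ℕ, (κ + 1) * M + s ≤ 2 ^ r ^ 2 ∧ s ≤ 2 ^ r ∧
      ∃ F : (Fin (κ + 1) → Fin M) → Fin s → Bool, IsUndecodable (D * r) (17 * D * r ^ 2) F := by
  filter_upwards [eventually_add_four_mul_pow_le 1 (2 * D),
    eventually_add_four_mul_pow_le (κ + 1) 1,
    eventually_mul_sq_mul_add_le_pow_four (17 * D) (κ + 1) 2,
    (tendsto_pow_atTop (by norm_num : 4 ≠ 0)).eventually_ge_atTop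
      ((κ + 2) ^ (κ + 1) + 2 ^ (κ + 2) ^ (κ + 1)), eventually_ge_atTop 1]
    with r hpow hs hvote hedge hr
  rw [pow_one] at hs
  have hR : 1 ≤ D * r := Nat.mul_pos hD hr
  have hR_lt : D * r < 2 * r ^ 4 := by
    calc D * r < 17 * D * r ^ 2 * ((κ + 1) * r + 2) + 1 := by
          rw [Nat.lt_succ_iff]
          calc D * r ≤ D * r * (17 * r * ((κ + 1) * r + 2)) :=
                Nat.le_mul_of_pos_right _ (by positivity)
            _ = 17 * D * r ^ 2 * ((κ + 1) * r + 2) := by ring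
      _ ≤ 2 * r ^ 4 := by omega
  obtain ⟨M, hM⟩ : ∃ M, M = 4 * (κ + 2) ^ κ * (4 * r ^ 4 + 1) ^ (D * r) := ⟨_, rfl⟩
  obtain ⟨hsM, hsize⟩ :=
    le_and_mul_add_le_pow hR (Nat.mul_le_mul_left 4 (le_of_add_le_left hedge)) hM
  refine ⟨M, 4 * r ^ 4, hsize.trans ?_, by omega, ?_⟩
  · calc (4 * r ^ 4 + 1) ^ (2 * (D * r)) = ((1 + 4 * r ^ 4) ^ (2 * D)) ^ r := by
          rw [← pow_mul, add_comm, mul_assoc]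
      _ ≤ (2 ^ r) ^ r := by gcongr
      _ = 2 ^ r ^ 2 := by rw [← pow_mul, sq]
  · refine exists_isUndecodable (t := r ^ 4) (r := r) ?_ ?_ ?_ ?_ (by omega) hvote hR_lt <;>
      simp only [Fintype.card_fin]
    exacts [hM.ge, hsM, hs]

lemma exists_two_pow_sq_le (r₀ : ℕ) : ∃ N : ℕ, ∀ n ≥ N, ∃ r ≥ r₀,
    2 ^ r ^ 2 ≤ n ∧ √(Real.logb 2 n) < r + 1 := by
  refine ⟨2 ^ r₀ ^ 2, fun n hn => ?_⟩
  have hn_pos : 1 ≤ n := (Nat.two_pow_pos _).trans_le hn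
  have hle_iff : ∀ j : ℕ, (j : ℝ) ≤ √(Real.logb 2 n) ↔ 2 ^ j ^ 2 ≤ n := fun j => by
    rw [Real.le_sqrt j.cast_nonneg (Real.logb_nonneg one_lt_two (mod_cast hn_pos)),
      Real.le_logb_iff_rpow_le one_lt_two (mod_cast hn_pos)]
    exact_mod_cast Iff.rfl
  exact ⟨⌊√(Real.logb 2 n)⌋₊, Nat.le_floor ((hle_iff r₀).2 hn),
    (hle_iff _).1 (Nat.floor_le (Real.sqrt_nonneg _)), Nat.lt_floor_add_one _⟩

end Parameters

theorem stmt13_general (C : ℝ) {k : ℕ} (hk : 2 ≤ k) : ∃ N : ℕ, ∀ n ≥ N, ∀ V : Type*,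
    (Fin n ↪ V) → ∃ g : (Fin k → V) → Bool, IsSymmetric g ∧ ∀ ε > 0,
      ∀ G : Set ((Fin (k - 1) → V) → Bool), IsDistinguishingClass G → Dominates G ε g →
        ∀ ρ : ℕ, gvcDim (k - 1) G ≤ ρ → C * ε ^ 2 * √(Real.logb 2 n) ≤ (ρ : ℝ) := by
  obtain ⟨κ, rfl⟩ := Nat.exists_eq_add_of_le' hk
  have hγ : 0 < edgeMass κ / 2 := half_pos (edgeMass_pos κ)
  obtain ⟨D, hD⟩ := exists_nat_ge (max 1 (2 * |C| / (edgeMass κ / 2) ^ 2))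
  obtain ⟨hD_one, hCD⟩ := max_le_iff.1 hD
  obtain ⟨r₀, hr₀⟩ := Filter.eventually_atTop.1
    (eventually_exists_isUndecodable κ (Nat.one_le_cast.1 hD_one))
  obtain ⟨N, hN⟩ := exists_two_pow_sq_le (max 1 r₀)
  refine ⟨N, fun n hn V ι => ?_⟩
  obtain ⟨r, hr, hrn, hlog⟩ := hN n hn
  obtain ⟨M, s, hMs, hs, F, hF⟩ := hr₀ r (le_of_max_le_right hr)
  obtain ⟨ψ⟩ : Nonempty (Vertex κ (Fin M) (Fin s) ↪ Fin n) :=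
    Function.Embedding.nonempty_of_card_le (by simpa using hMs.trans hrn)
  refine ⟨partite (ι ∘ ψ) F, isSymmetric_partite _ _, fun ε hε G hG hdom ρ hρ => ?_⟩
  have hr_one : 1 ≤ r := le_of_max_le_left hr
  have hlog' : √(Real.logb 2 n) ≤ 2 * r := by
    have : (1 : ℝ) ≤ r := by exact_mod_cast hr_one
    linarith
  calc (C * ε ^ 2 * √(Real.logb 2 n) : ℝ) ≤ |C| * ε ^ 2 * (2 * r) := by
        gcongr
        exact le_abs_self C
    _ = 2 * |C| * (r * ε ^ 2) := by ring
    _ ≤ D * (edgeMass κ / 2) ^ 2 * (r * ε ^ 2) := by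
        exact mul_le_mul_of_nonneg_right ((div_le_iff₀ (by positivity)).1 hCD) (by positivity)
    _ = D * r * (ε * edgeMass κ / 2) ^ 2 := by ring
    _ ≤ ρ := le_of_dominates_of_isUndecodable hr_one (by simpa using hs) hF
        (ι.injective.comp ψ.injective) hG hε hdom hρ

/-- expressiveness over finite domains, `k`-ary case
(Theorem `main_expressive_finite_k`). -/
theorem stmt13 :
    ∃ c : ℝ, 0 < c ∧
      ∀ k : ℕ, 2 ≤ k → ∃ N : ℕ, ∀ n : ℕ, N ≤ n →
        ∀ (V : Type) [Fintype V], Fintype.card V = n →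
          ∃ g : (Fin k → V) → Bool, IsSymmetric g ∧
            ∀ ε : ℝ, 0 < ε →
              ∀ G : Set ((Fin (k - 1) → V) → Bool), IsDistinguishingClass G →
                (∀ p₁ p₂ : V → ℝ, IsDist p₁ → IsDist p₂ →
                  IPM G p₁ p₂ ≥ ε * |LP p₁ g - LP p₂ g|) →
                ∀ ρ : ℕ, gvcDim (k - 1) G ≤ (ρ : ℕ∞) →
                  (ρ : ℝ) ≥ c * (ε ^ 2 / (k : ℝ) ^ 2) * Real.sqrt (Real.logb 2 n) := by
  refine ⟨1, one_pos, fun k hk => ?_⟩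
  obtain ⟨N, hN⟩ := stmt13_general (1 / (k : ℝ) ^ 2) hk
  refine ⟨N, fun n hn V _ hV => ?_⟩
  simpa only [one_mul, one_div_mul_eq_div] using!
    hN n hn V (Fintype.equivFinOfCardEq hV).symm.toEmbedding

end GraphDisc
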